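/- Let F = (R, Σ) be a subset-free congestion game form containing a bad configuration: resources A, C and strategies s1, s2, s3 ∈ Σ with A ∈ (s1 ∩ s3) \ s2 and C ∈ (s1 ∩ s2) \ s3. If every monotone symmetric congestion game G ∈ 𝒢(F) satisfies Z(G) = NE(G), then (s2 ∩ s3) \ s1 = ∅. -/

import Mathlib

/-!
The hypotheses are in fact contradictory: a bad configuration alone yields a two-player monotone
game with a Nash equilibrium that is not greedy.

Give `A` and `C` a large payoff `N` when used by one player only, and let every other payoff be
small. In the profile `(s3, s2)` the two players hold one of `A`, `C` each, and neither can gain,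
since the prize held by the opponent is worthless once shared. Hence the profile is an equilibrium
(`pay_util_ge`, `pay_util_le`). It is not greedy: the player who moves first sees an empty board,
where `s1` collects both prizes and beats both `s2` and `s3` (`pay_one_ge`, `pay_one_le`).

The small payoffs are calibrated so that, apart from the prizes, each player's strategy is worth
exactly `0` in the profile and no resource is worth more than `0` to a deviator: with `k` users,
resources of `s2 ∩ s3` pay `2 - k`, all others pay `1 - k`.
-/

open Finset

/-- Congestion of resource `r` under strategy profile `s` (players `ι`). -/
def cgCong {ρ ι : Type} [DecidableEq ρ] [Fintype ι] (s : ι → Finset ρ) (r : ρ) : ℕ :=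
  (Finset.univ.filter (fun i => r ∈ s i)).card

/-- Utility of player `i`: the sum of `P r (c(s)_r)` over the resources she uses. -/
def cgUtil {ρ ι : Type} [DecidableEq ρ] [Fintype ι] (P : ρ → ℕ → ℝ)
    (s : ι → Finset ρ) (i : ι) : ℝ :=
  ∑ r ∈ s i, P r (cgCong s r)

/-- A strategy profile: every player selects a strategy from the strategy set `SS`. -/
def IsProfile {ρ ι : Type} (SS : Finset (Finset ρ)) (s : ι → Finset ρ) : Prop :=
  ∀ i, s i ∈ SS

/-- Pure Nash equilibrium. -/
def IsNE {ρ ι : Type} [DecidableEq ρ] [DecidableEq ι] [Fintype ι]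
    (SS : Finset (Finset ρ)) (P : ρ → ℕ → ℝ) (s : ι → Finset ρ) : Prop :=
  IsProfile SS s ∧
    ∀ i : ι, ∀ t ∈ SS, cgUtil P s i ≥ cgUtil P (Function.update s i t) i

/-- The congestion seen by player `i` on resource `r` from players preceding her
in the order `π`. -/
def greedyCong {ρ ι : Type} [DecidableEq ρ] [Fintype ι] (s : ι → Finset ρ)
    (π : ι → ℕ) (i : ι) (r : ρ) : ℕ :=
  (Finset.univ.filter (fun j => r ∈ s j ∧ π j < π i)).card

/-- Greedy profile: for some linear order (injective ranking `π`) of the players,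
each player's strategy is a best response to the choices of her predecessors. -/
def IsGreedy {ρ ι : Type} [DecidableEq ρ] [Fintype ι]
    (SS : Finset (Finset ρ)) (P : ρ → ℕ → ℝ) (s : ι → Finset ρ) : Prop :=
  IsProfile SS s ∧
    ∃ π : ι → ℕ, Function.Injective π ∧ ∀ i : ι, ∀ t ∈ SS,
      (∑ r ∈ s i, P r (greedyCong s π i r + 1)) ≥
        ∑ r ∈ t, P r (greedyCong s π i r + 1)

/-- Monotone resource payoffs (for a game with `n` players):
`P_r(k) > P_r(l)` whenever `1 ≤ k < l ≤ n`. -/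
def MonotonePay {ρ : Type} (n : ℕ) (P : ρ → ℕ → ℝ) : Prop :=
  ∀ r : ρ, ∀ k l : ℕ, 1 ≤ k → k < l → l ≤ n → P r k > P r l

/-- A congestion game form: nonempty strategy set consisting of nonempty resource sets. -/
def ValidForm {ρ : Type} (SS : Finset (Finset ρ)) : Prop :=
  SS.Nonempty ∧ ∀ s ∈ SS, s.Nonempty

/-- Subset-free strategy set. -/
def SubsetFree {ρ : Type} (SS : Finset (Finset ρ)) : Prop :=
  ∀ s ∈ SS, ∀ t ∈ SS, s ≠ t → ¬ s ⊆ t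

/-- A bad configuration (Holzman–Law Yone): a form is tree representable iff
it has no bad configuration. -/
def BadConfig {ρ : Type} (SS : Finset (Finset ρ)) : Prop :=
  ∃ A B : ρ, ∃ s1 ∈ SS, ∃ s2 ∈ SS, ∃ s3 ∈ SS,
    A ∈ s1 ∧ B ∈ s1 ∧ A ∈ s2 ∧ A ∉ s3 ∧ B ∈ s3 ∧ B ∉ s2

/-- Payoffs of the counterexample game: `2 - k` on the shared resources `u ∩ v`, `1 - k` elsewhere,
plus a prize `N` on `A` and `C` for a sole user. -/
noncomputable def prizePay {ρ : Type} [DecidableEq ρ] (u v : Finset ρ) (A C : ρ) (N : ℝ)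
    (r : ρ) (k : ℕ) : ℝ :=
  (if r ∈ u ∧ r ∈ v then 2 else 1) - (k : ℝ) + (if (r = A ∨ r = C) ∧ k ≤ 1 then N else 0)

lemma prizePay_mono {ρ : Type} [DecidableEq ρ] (u v : Finset ρ) (A C : ρ) {N : ℝ} (hN : 0 ≤ N)
    (n : ℕ) : MonotonePay n (prizePay u v A C N) := by
  intro r k l _ hkl _
  have h : (k : ℝ) < l := by exact_mod_cast hkl
  have hb : (if (r = A ∨ r = C) ∧ l ≤ 1 then N else 0) ≤
      (if (r = A ∨ r = C) ∧ k ≤ 1 then N else 0) := by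
    split_ifs with h1 h2
    · exact le_rfl
    · exact absurd ⟨h1.1, by omega⟩ h2
    · exact hN
    · exact le_rfl
  unfold prizePay
  linarith

lemma sum_prize {ρ : Type} [DecidableEq ρ] (w : Finset ρ) (A : ρ) (N : ℝ) :
    ∑ r ∈ w, (if r = A then N else 0) = if A ∈ w then N else 0 := by
  simp

/-- Against an opponent on `v`, the strategy `u` holding the prize `A` is worth at least `N`. -/
lemma pay_util_ge {ρ : Type} [DecidableEq ρ] (u v : Finset ρ) (A C : ρ) {N : ℝ} (hN : 0 ≤ N)
    (hAu : A ∈ u) (hAv : A ∉ v) :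
    N ≤ ∑ r ∈ u, prizePay u v A C N r (1 + if r ∈ v then 1 else 0) := by
  have h := sum_prize u A N
  rw [if_pos hAu] at h
  rw [← h]
  refine Finset.sum_le_sum fun r hr => ?_
  unfold prizePay
  by_cases hA : r = A
  · subst hA; simp [hAu, hAv]
  · by_cases hv : r ∈ v
    · simp [hA, hv, hr]
    · simp [hA, hv]; split_ifs <;> linarith

/-- Against an opponent on `v ∋ C`, no strategy is worth more than `N`: the prize at `C` is lost
by sharing. -/
lemma pay_util_le {ρ : Type} [DecidableEq ρ] (u v t : Finset ρ) (A C : ρ) {N : ℝ} (hN : 0 ≤ N)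
    (hAv : A ∉ v) (hCv : C ∈ v) :
    ∑ r ∈ t, prizePay u v A C N r (1 + if r ∈ v then 1 else 0) ≤ N := by
  calc _ ≤ ∑ r ∈ t, (if r = A then N else 0) := by
        refine Finset.sum_le_sum fun r _ => ?_
        unfold prizePay
        by_cases hA : r = A
        · subst hA; simp [hAv]
        · by_cases hv : r ∈ v
          · simp [hA, hv]; split_ifs <;> norm_num
          · have : r ≠ C := fun h => hv (h ▸ hCv)
            simp [hA, hv, this]
    _ ≤ N := by
        rw [sum_prize]; split_ifs <;> linarith

/-- On an empty board, a strategy containing both `A` and `C` collects two prizes. -/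
lemma pay_one_ge {ρ : Type} [DecidableEq ρ] (u v w : Finset ρ) (A C : ρ) (N : ℝ)
    (hAC : A ≠ C) (hA : A ∈ w) (hC : C ∈ w) :
    2 * N ≤ ∑ r ∈ w, prizePay u v A C N r 1 := by
  have h : ∑ r ∈ w, ((if r = A then N else 0) + (if r = C then N else 0)) = 2 * N := by
    rw [Finset.sum_add_distrib, sum_prize, sum_prize, if_pos hA, if_pos hC]; ring
  rw [← h]
  refine Finset.sum_le_sum fun r _ => ?_
  unfold prizePay
  by_cases h1 : r = A
  · subst h1; simp [hAC]; split_ifs <;> norm_num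
  · by_cases h2 : r = C
    · simp [h2, Ne.symm hAC]; split_ifs <;> norm_num
    · simp [h1, h2]; split_ifs <;> norm_num

/-- On an empty board, a strategy missing `C` collects at most one prize. -/
lemma pay_one_le {ρ : Type} [DecidableEq ρ] [Fintype ρ] (u v w : Finset ρ) (A C : ρ) {N : ℝ}
    (hN : 0 ≤ N) (hC : C ∉ w) :
    ∑ r ∈ w, prizePay u v A C N r 1 ≤ Fintype.card ρ + N := by
  have hc : (w.card : ℝ) ≤ Fintype.card ρ := by exact_mod_cast Finset.card_le_univ w
  have h : ∑ r ∈ w, ((1 : ℝ) + (if r = A then N else 0)) ≤ Fintype.card ρ + N := by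
    rw [Finset.sum_add_distrib, sum_prize]
    simp only [Finset.sum_const, nsmul_eq_mul, mul_one]
    split_ifs <;> linarith
  refine le_trans (Finset.sum_le_sum fun r hr => ?_) h
  have h2 : r ≠ C := fun h => hC (h ▸ hr)
  unfold prizePay
  by_cases h1 : r = A
  · simp [h1]; split_ifs <;> norm_num
  · simp [h1, h2]; split_ifs <;> norm_num

/-- Exchanging the two players together with their prizes leaves the payoffs unchanged, so the
estimates above need proof for one player only. -/
lemma prizePay_swap {ρ : Type} [DecidableEq ρ] (u v : Finset ρ) (A C : ρ) (N : ℝ) :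
    prizePay u v A C N = prizePay v u C A N := by
  funext r k
  simp only [prizePay, and_comm (a := r ∈ u), or_comm (a := r = A)]

lemma cgUtil_pair_zero {ρ : Type} [DecidableEq ρ] (P : ρ → ℕ → ℝ) (u v : Finset ρ) :
    cgUtil P ![u, v] 0 = ∑ r ∈ u, P r (1 + if r ∈ v then 1 else 0) := by
  unfold cgUtil
  refine Finset.sum_congr rfl fun r hr => ?_
  have hr' : r ∈ u := hr
  congr 1
  rw [cgCong, Finset.card_filter, Fin.sum_univ_two]
  simp [hr']

lemma cgUtil_pair_one {ρ : Type} [DecidableEq ρ] (P : ρ → ℕ → ℝ) (u v : Finset ρ) :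
    cgUtil P ![u, v] 1 = ∑ r ∈ v, P r (1 + if r ∈ u then 1 else 0) := by
  unfold cgUtil
  refine Finset.sum_congr rfl fun r hr => ?_
  have hr' : r ∈ v := hr
  congr 1
  rw [cgCong, Finset.card_filter, Fin.sum_univ_two, add_comm]
  simp [hr']
  rfl

lemma update_pair_zero {α : Type} (u v t : α) : Function.update ![u, v] 0 t = ![t, v] := by
  funext i; fin_cases i <;> simp

lemma update_pair_one {α : Type} (u v t : α) : Function.update ![u, v] 1 t = ![u, t] := by
  funext i; fin_cases i <;> simp

/-- Given a bad configuration `(A, C, s1, s2, s3)` in a subset-free form: if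
every monotone game with this form satisfies `Z(G) = NE(G)`, then
`(s2 ∩ s3) \ s1 = ∅`. -/
theorem no_common_resource_outside_s1 {ρ : Type} [DecidableEq ρ] [Fintype ρ]
    (SS : Finset (Finset ρ)) (hform : ValidForm SS) (hsf : SubsetFree SS)
    (A C : ρ) (s1 s2 s3 : Finset ρ)
    (h1 : s1 ∈ SS) (h2 : s2 ∈ SS) (h3 : s3 ∈ SS)
    (hA1 : A ∈ s1) (hA3 : A ∈ s3) (hA2 : A ∉ s2)
    (hC1 : C ∈ s1) (hC2 : C ∈ s2) (hC3 : C ∉ s3)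
    (hZN : ∀ n : ℕ, 1 ≤ n → ∀ P : ρ → ℕ → ℝ, MonotonePay n P →
      ∀ s : Fin n → Finset ρ, (IsGreedy SS P s ↔ IsNE SS P s)) :
    (s2 ∩ s3) \ s1 = ∅ := by
  exfalso
  have hAC : A ≠ C := fun h => hC3 (h ▸ hA3)
  -- The prize must exceed the total small payoff available on an empty board.
  set N : ℝ := Fintype.card ρ + 1 with hNdef
  have hcard : (0 : ℝ) ≤ Fintype.card ρ := Nat.cast_nonneg _
  have hN : 0 ≤ N := by linarith
  have hprof : IsProfile SS ![s3, s2] := by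
    intro i; fin_cases i <;> simp [h2, h3]
  have hNE : IsNE SS (prizePay s3 s2 A C N) ![s3, s2] := by
    refine ⟨hprof, fun i t _ => ?_⟩
    fin_cases i
    · change cgUtil _ _ 0 ≥ cgUtil _ (Function.update _ 0 t) 0
      rw [update_pair_zero, cgUtil_pair_zero, cgUtil_pair_zero]
      exact (pay_util_le s3 s2 t A C hN hA2 hC2).trans (pay_util_ge s3 s2 A C hN hA3 hA2)
    · change cgUtil _ _ 1 ≥ cgUtil _ (Function.update _ 1 t) 1
      rw [update_pair_one, cgUtil_pair_one, cgUtil_pair_one, prizePay_swap]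
      exact (pay_util_le s2 s3 t C A hN hC3 hA3).trans (pay_util_ge s2 s3 C A hN hC2 hC3)
  obtain ⟨-, π, -, hg⟩ := (hZN 2 (by norm_num) _ (prizePay_mono s3 s2 A C hN 2) ![s3, s2]).2 hNE
  obtain ⟨i, hi⟩ := Finite.exists_min π
  have hz : ∀ r, greedyCong ![s3, s2] π i r = 0 := fun r => by
    simp [greedyCong, fun j => not_lt.2 (hi j)]
  have hfirst := hg i s1 h1
  simp only [hz, zero_add] at hfirst
  have hlow := pay_one_ge s3 s2 s1 A C N hAC hA1 hC1
  have hup : ∑ r ∈ (![s3, s2] : Fin 2 → Finset ρ) i, prizePay s3 s2 A C N r 1 ≤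
      Fintype.card ρ + N := by
    fin_cases i
    · exact pay_one_le s3 s2 s3 A C hN hC3
    · rw [prizePay_swap]
      exact pay_one_le s2 s3 s2 C A hN hA2
  linarith
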